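/- Let m ∈ ℂ ∖ ℤ. Then the 1d Macdonald function 𝓚_m(r) := (𝓘_{−m}(r) − 𝓘_m(r))/sin(πm) satisfies the asymptotics e^{r} · 𝓚_m(r) → 1 as r → ∞ along the positive real axis. -/

import Mathlib

open Complex Filter

/-- Olver-normalized hypergeometric function `₀𝐅₁(c; w) = ∑ wⁿ/(n! Γ(c+n))`. -/
noncomputable def zeroF1reg (c w : ℂ) : ℂ :=
  ∑' n : ℕ, w ^ n / ((n.factorial : ℂ) * Complex.Gamma (c + n))

/-- Hyperbolic 1d Bessel function `𝓘_m(z) = √π (z/2)^{1/2+m} ₀𝐅₁(m+1; z²/4)`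
(principal branch powers). -/
noncomputable def besselI1d (m z : ℂ) : ℂ :=
  (Real.sqrt Real.pi : ℂ) * (z / 2) ^ ((1 : ℂ) / 2 + m) * zeroF1reg (m + 1) (z ^ 2 / 4)

/-- 1d Macdonald function `𝓚_m(z) = (𝓘_{-m}(z) - 𝓘_m(z))/sin(π m)` for `m ∉ ℤ`. -/
noncomputable def macdonaldK1d (m z : ℂ) : ℂ :=
  (besselI1d (-m) z - besselI1d m z) / Complex.sin (Real.pi * m)

/-!
Let `I_m` and `K_m` denote the two functions above. Their Wronskian is constant, so
`(K_m / I_m)' = -1 / I_m²` on the positive axis. Moreover `e^{-r} I_m(r) → 1/2` for every `m`: for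
`Re m > -1/2` this is Watson's lemma applied to Poisson's integral representation, and the
recurrence expressing `I_{m-1}` through `I_m` and `I_{m+1}` carries it to all `m`. Hence
`K_m / I_m → 0` with derivative equivalent to `-4 e^{-2r}`, so `K_m / I_m ~ 2 e^{-2r}` by
L'Hôpital's rule, and `e^r K_m = (e^{2r} K_m / I_m) (e^{-r} I_m) → 2 · 1/2 = 1`.
-/

open Asymptotics MeasureTheory Set Topology
open scoped Real

section ZeroF1reg

lemma summable_zeroF1reg (c w : ℂ) :
    Summable fun n : ℕ => w ^ n / ((n.factorial : ℂ) * Gamma (c + n)) := by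
  have hradius : (regularizedHGFunSeries 0 {c}).radius = ⊤ :=
    radius_regularizedHGFunSeries_eq_top (by simp)
  refine ((regularizedHGFunSeries 0 {c}).summable (x := w) (by simp [hradius])).congr fun n => ?_
  rw [FormalMultilinearSeries.apply_eq_pow_smul_coeff, regularizedHGFunSeries_coeff]
  simp [regularizedHGFunCoeff, div_eq_mul_inv]

lemma zeroF1reg_zero_right (c : ℂ) : zeroF1reg c 0 = (Gamma c)⁻¹ := by
  rw [zeroF1reg, tsum_eq_single 0 fun n hn => by simp [hn]]
  simp

lemma succ_div_factorial_succ_mul_Gamma (c : ℂ) (n : ℕ) :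
    ((n + 1 : ℕ) : ℂ) / (((n + 1).factorial : ℂ) * Gamma (c + (n + 1 : ℕ))) =
      1 / ((n.factorial : ℂ) * Gamma (c + 1 + n)) := by
  rw [Nat.factorial_succ, Nat.cast_mul, mul_assoc,
    div_mul_cancel_left₀ (Nat.cast_ne_zero.2 n.succ_ne_zero), one_div, Nat.cast_succ,
    add_right_comm c, add_assoc c]

lemma hasDerivAt_zeroF1reg (c w : ℂ) : HasDerivAt (zeroF1reg c) (zeroF1reg (c + 1) w) w := by
  set R : ℝ := ‖w‖ + 1
  have hw : w ∈ Metric.ball (0 : ℂ) R := by simp [R]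
  have hsummable := (summable_zeroF1reg c R).norm
  have hdiff (n : ℕ) : DifferentiableOn ℂ
      (fun z : ℂ => z ^ n / ((n.factorial : ℂ) * Gamma (c + n))) (Metric.ball 0 R) := by
    fun_prop
  have hbound (n : ℕ) (z : ℂ) (hz : z ∈ Metric.ball (0 : ℂ) R) :
      ‖z ^ n / ((n.factorial : ℂ) * Gamma (c + n))‖ ≤
        ‖(R : ℂ) ^ n / ((n.factorial : ℂ) * Gamma (c + n))‖ := by
    rw [mem_ball_zero_iff] at hz
    rw [norm_div, norm_div, norm_pow, norm_pow, norm_real, Real.norm_of_nonneg (by positivity)]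
    gcongr
  have hderiv : deriv (zeroF1reg c) w = zeroF1reg (c + 1) w := by
    have hsum := hasSum_deriv_of_summable_norm hsummable hdiff Metric.isOpen_ball hbound hw
    refine hsum.tsum_eq.symm.trans (hsum.summable.tsum_eq_zero_add.trans ?_)
    simp only [deriv_div_const, pow_zero, deriv_const, zero_div, zero_add, zeroF1reg]
    refine tsum_congr fun n => ?_
    rw [deriv_pow_field, Nat.add_sub_cancel, mul_div_right_comm,
      succ_div_factorial_succ_mul_Gamma, one_div_mul_eq_div]
  rw [← hderiv]
  exact ((differentiableOn_tsum_of_summable_norm hsummable hdiff Metric.isOpen_ball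
    hbound).differentiableAt (Metric.isOpen_ball.mem_nhds hw)).hasDerivAt

lemma zeroF1reg_eq_add (c w : ℂ) :
    zeroF1reg c w = c * zeroF1reg (c + 1) w + w * zeroF1reg (c + 2) w := by
  set t : ℕ → ℂ := fun n => w ^ n / ((n.factorial : ℂ) * Gamma (c + 1 + n)) with ht
  have hterm (n : ℕ) : w ^ n / ((n.factorial : ℂ) * Gamma (c + n)) =
      c * t n + (n : ℂ) * t n := by
    have hGamma := one_div_Gamma_eq_self_mul_one_div_Gamma_add_one (c + n)
    rw [ht, div_eq_mul_inv, mul_inv, hGamma, add_right_comm c]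
    ring
  have ht_summable : Summable t := summable_zeroF1reg (c + 1) w
  have hnt_summable : Summable fun n : ℕ => (n : ℂ) * t n :=
    ((summable_zeroF1reg c w).sub (ht_summable.mul_left c)).congr fun n => by simp [hterm]
  have hshift : ∑' n : ℕ, (n : ℂ) * t n = w * zeroF1reg (c + 2) w := by
    rw [hnt_summable.tsum_eq_zero_add, zeroF1reg, ← tsum_mul_left, Nat.cast_zero, zero_mul,
      zero_add]
    refine tsum_congr fun n => ?_
    rw [ht, mul_div_left_comm, succ_div_factorial_succ_mul_Gamma, add_assoc c 1 1,
      one_add_one_eq_two]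
    ring
  calc zeroF1reg c w = ∑' n : ℕ, (c * t n + (n : ℂ) * t n) := tsum_congr hterm
    _ = c * zeroF1reg (c + 1) w + w * zeroF1reg (c + 2) w := by
      rw [(ht_summable.mul_left c).tsum_add hnt_summable, tsum_mul_left, hshift]
      rfl

/-- At `w = 0` this is Euler's reflection formula; the left-hand side does not depend on `w`
because its derivative vanishes by the contiguous relation. -/
lemma zeroF1reg_reflection (c w : ℂ) :
    zeroF1reg c w * zeroF1reg (1 - c) w - w * (zeroF1reg (c + 1) w * zeroF1reg (2 - c) w) =
      sin (π * c) / π := by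
  set Q : ℂ → ℂ := fun w =>
    zeroF1reg c w * zeroF1reg (1 - c) w - w * (zeroF1reg (c + 1) w * zeroF1reg (2 - c) w) with hQ
  have hderiv (w : ℂ) : HasDerivAt Q 0 w := by
    have h := ((hasDerivAt_zeroF1reg c w).mul (hasDerivAt_zeroF1reg (1 - c) w)).sub
      ((hasDerivAt_id w).mul
        ((hasDerivAt_zeroF1reg (c + 1) w).mul (hasDerivAt_zeroF1reg (2 - c) w)))
    refine h.congr_deriv ?_
    have h₁ := zeroF1reg_eq_add c w
    have h₂ := zeroF1reg_eq_add (1 - c) w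
    rw [show 1 - c + 1 = 2 - c by ring, show 1 - c + 2 = 3 - c by ring] at h₂
    rw [show 1 - c + 1 = 2 - c by ring, show 2 - c + 1 = 3 - c by ring,
      show c + 1 + 1 = c + 2 by ring]
    simp only [id, Pi.mul_apply]
    linear_combination zeroF1reg (2 - c) w * h₁ + zeroF1reg (c + 1) w * h₂
  calc Q w = Q 0 :=
        is_const_of_deriv_eq_zero (fun w => (hderiv w).differentiableAt)
          (fun w => (hderiv w).deriv) w 0
    _ = (Gamma c * Gamma (1 - c))⁻¹ := by simp [hQ, zeroF1reg_zero_right, mul_comm]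
    _ = sin (π * c) / π := by rw [Gamma_mul_Gamma_one_sub, inv_div]

end ZeroF1reg

section Bessel

variable (m : ℂ) {z : ℂ}

lemma besselI1d_sub_one (hz : z ≠ 0) :
    besselI1d (m - 1) z = besselI1d (m + 1) z + 2 * m / z * besselI1d m z := by
  have hz2 : z / 2 ≠ 0 := div_ne_zero hz two_ne_zero
  simp only [besselI1d]
  rw [show m - 1 + 1 = m by ring, zeroF1reg_eq_add m, show m + 1 + 1 = m + 2 by ring,
    ← add_sub_assoc, ← add_assoc, cpow_sub (1 / 2 + m) 1 hz2,
    cpow_add (1 / 2 + m) 1 hz2, cpow_one]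
  field_simp
  ring

lemma hasDerivAt_besselI1d (hz : z ∈ slitPlane) :
    HasDerivAt (besselI1d m) ((1 / 2 + m) / z * besselI1d m z + besselI1d (m + 1) z) z := by
  have hz0 : z ≠ 0 := slitPlane_ne_zero hz
  have hz2 : z / 2 ≠ 0 := div_ne_zero hz0 two_ne_zero
  have hslit : z / 2 ∈ slitPlane := by
    simpa [mem_slitPlane_iff, div_re, div_im] using hz
  have hpow := ((hasDerivAt_id z).div_const 2).cpow_const (c := 1 / 2 + m) hslit
  have hF : HasDerivAt (fun z : ℂ => zeroF1reg (m + 1) (z ^ 2 / 4)) _ z :=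
    HasDerivAt.comp (h₂ := zeroF1reg (m + 1)) (h := fun z : ℂ => z ^ 2 / 4) z
      (hasDerivAt_zeroF1reg (m + 1) (z ^ 2 / 4)) ((hasDerivAt_pow 2 z).div_const 4)
  refine ((hpow.const_mul (√π : ℂ)).mul hF).congr_deriv ?_
  simp only [besselI1d, id]
  rw [← add_assoc, cpow_sub (1 / 2 + m) 1 hz2, cpow_add (1 / 2 + m) 1 hz2, cpow_one]
  field_simp
  ring

lemma hasDerivAt_besselI1d' (hz : z ∈ slitPlane) :
    HasDerivAt (besselI1d m) ((1 / 2 - m) / z * besselI1d m z + besselI1d (m - 1) z) z := by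
  refine (hasDerivAt_besselI1d m hz).congr_deriv ?_
  rw [besselI1d_sub_one m (slitPlane_ne_zero hz)]
  ring

lemma besselI1d_mul_besselI1d_neg_sub_one_sub (hz : z ≠ 0) :
    besselI1d m z * besselI1d (-m - 1) z - besselI1d (m + 1) z * besselI1d (-m) z =
      -sin (π * m) := by
  have hz2 : z / 2 ≠ 0 := div_ne_zero hz two_ne_zero
  have hpow₁ : (z / 2) ^ (1 / 2 + m) * (z / 2) ^ (1 / 2 + (-m - 1)) = 1 := by
    rw [← cpow_add _ _ hz2, show 1 / 2 + m + (1 / 2 + (-m - 1)) = 0 by ring, cpow_zero]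
  have hpow₂ : (z / 2) ^ (1 / 2 + (m + 1)) * (z / 2) ^ (1 / 2 + -m) = z ^ 2 / 4 := by
    rw [← cpow_add _ _ hz2, show 1 / 2 + (m + 1) + (1 / 2 + -m) = (2 : ℕ) by push_cast; ring,
      cpow_natCast]
    ring
  have hpi : (√π : ℂ) * √π = π := by exact_mod_cast Real.mul_self_sqrt Real.pi_pos.le
  have hpi0 : (π : ℂ) ≠ 0 := ofReal_ne_zero.2 Real.pi_ne_zero
  have hreflection := zeroF1reg_reflection (m + 1) (z ^ 2 / 4)
  rw [mul_add, mul_one, sin_add_pi, eq_div_iff hpi0, show 1 - (m + 1) = -m by ring,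
    show 2 - (m + 1) = -m + 1 by ring] at hreflection
  simp only [besselI1d, sub_add_cancel]
  set F := zeroF1reg (m + 1) (z ^ 2 / 4) * zeroF1reg (-m) (z ^ 2 / 4)
  set G := zeroF1reg (m + 1 + 1) (z ^ 2 / 4) * zeroF1reg (-m + 1) (z ^ 2 / 4)
  rw [← hreflection, ← hpi]
  linear_combination (√π * √π * F) * hpow₁ - (√π * √π * G) * hpow₂

variable {m}

lemma hasDerivAt_macdonaldK1d_div_besselI1d (hm : sin (π * m) ≠ 0) (hz : z ∈ slitPlane)
    (hI : besselI1d m z ≠ 0) :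
    HasDerivAt (fun w => macdonaldK1d m w / besselI1d m w) (-1 / besselI1d m z ^ 2) z := by
  have hK : HasDerivAt (macdonaldK1d m) _ z :=
    ((hasDerivAt_besselI1d' (-m) hz).sub (hasDerivAt_besselI1d m hz)).div_const (sin (π * m))
  refine (hK.div (hasDerivAt_besselI1d m hz) hI).congr_deriv ?_
  have hz0 : z ≠ 0 := slitPlane_ne_zero hz
  have hwronskian := besselI1d_mul_besselI1d_neg_sub_one_sub m hz0
  rw [macdonaldK1d]
  generalize sin (π * m) = s at *
  field_simp
  linear_combination 2 * z * hwronskian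

end Bessel

section Poisson

lemma betaIntegral_eq_two_mul_integral (u v : ℂ) :
    betaIntegral u v =
      2 * ∫ t in (0 : ℝ)..1, (t : ℂ) ^ (2 * u - 1) * (1 - (t : ℂ) ^ 2) ^ (v - 1) := by
  have hsubst := intervalIntegral.integral_deriv_smul_comp_of_deriv_nonneg (a := 0) (b := 1)
    (f := fun t : ℝ => t ^ 2) (f' := fun t => 2 * t)
    (g := fun x : ℝ => (x : ℂ) ^ (u - 1) * (1 - (x : ℂ)) ^ (v - 1))
    (by fun_prop) (fun t _ => by simpa using hasDerivAt_pow 2 t)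
    (fun t ht => by simpa using ht.1.le)
  simp only [ne_eq, OfNat.ofNat_ne_zero, not_false_eq_true, zero_pow, one_pow] at hsubst
  rw [betaIntegral, ← hsubst, ← intervalIntegral.integral_const_mul]
  refine intervalIntegral.integral_congr_Ioo_of_le zero_le_one fun t ht => ?_
  have ht0 : (t : ℂ) ≠ 0 := ofReal_ne_zero.2 ht.1.ne'
  have hpow : (t : ℂ) * ((t : ℂ) ^ 2) ^ (u - 1) = (t : ℂ) ^ (2 * u - 1) := by
    rw [sq, mul_cpow_ofReal_nonneg ht.1.le ht.1.le, ← cpow_add _ _ ht0,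
      show 2 * u - 1 = 1 + (u - 1 + (u - 1)) by ring, cpow_add 1 _ ht0, cpow_one]
  simp only [real_smul, Function.comp_apply, ofReal_mul, ofReal_ofNat, ofReal_pow]
  rw [← hpow]
  ring

lemma factorial_mul_Gamma_add_half (n : ℕ) :
    (n.factorial : ℂ) * Gamma (n + 1 / 2) * 4 ^ n = √π * (2 * n).factorial := by
  have h := Gamma_mul_Gamma_add_half ((n : ℂ) + 1 / 2)
  rw [show (n : ℂ) + 1 / 2 + 1 / 2 = n + 1 by ring, Gamma_nat_eq_factorial,
    show 2 * ((n : ℂ) + 1 / 2) = (2 * n : ℕ) + 1 by push_cast; ring, Gamma_nat_eq_factorial,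
    show (1 : ℂ) - ((2 * n : ℕ) + 1) = -((2 * n : ℕ) : ℂ) by push_cast; ring,
    cpow_neg, cpow_natCast, pow_mul, show (2 : ℂ) ^ 2 = 4 by norm_num] at h
  rw [mul_comm (n.factorial : ℂ), h]
  field_simp

lemma betaIntegral_natCast_add_half_div_factorial {a : ℂ} (ha : 0 < a.re) (n : ℕ) :
    betaIntegral (n + 1 / 2) a / (2 * n).factorial =
      √π * Gamma a / (4 ^ n * (n.factorial * Gamma (a + 1 / 2 + n))) := by
  have hre : ((n : ℂ) + 1 / 2).re = n + 1 / 2 := by simp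
  have hn : 0 < ((n : ℂ) + 1 / 2).re := by rw [hre]; positivity
  have hfact : ((2 * n).factorial : ℂ) ≠ 0 := by exact_mod_cast (2 * n).factorial_ne_zero
  have hfact' : (n.factorial : ℂ) ≠ 0 := by exact_mod_cast n.factorial_ne_zero
  rw [betaIntegral_eq_Gamma_mul_div _ _ hn ha, show (n : ℂ) + 1 / 2 + a = a + 1 / 2 + n by ring]
  have hdup := factorial_mul_Gamma_add_half n
  calc Gamma (n + 1 / 2) * Gamma a / Gamma (a + 1 / 2 + n) / (2 * n).factorial
      = n.factorial * Gamma (n + 1 / 2) * 4 ^ n / (2 * n).factorial * Gamma a /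
          (4 ^ n * (n.factorial * Gamma (a + 1 / 2 + n))) := by field_simp
    _ = _ := by rw [hdup, mul_div_cancel_right₀ _ hfact]

lemma one_sub_sq_cpow {t : ℝ} (ht : t ∈ Icc (0 : ℝ) 1) (b : ℂ) :
    (1 - (t : ℂ) ^ 2) ^ b = (1 - (t : ℂ)) ^ b * (1 + (t : ℂ)) ^ b := by
  have h := mul_cpow_ofReal_nonneg (sub_nonneg.2 ht.2) (add_nonneg zero_le_one ht.1) b
  push_cast at h
  rw [← h]
  ring_nf

lemma intervalIntegrable_one_sub_sq_cpow {a : ℂ} (ha : 0 < a.re) :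
    IntervalIntegrable (fun t : ℝ => (1 - (t : ℂ) ^ 2) ^ (a - 1)) volume 0 1 := by
  have hsing : IntervalIntegrable (fun t : ℝ => (1 - (t : ℂ)) ^ (a - 1)) volume 0 1 := by
    have h := (intervalIntegral.intervalIntegrable_cpow' (r := a - 1) (a := 0) (b := 1)
      (by simpa using ha)).comp_sub_left 1
    simpa using h.symm
  have hcont : ContinuousOn (fun t : ℝ => (1 + (t : ℂ)) ^ (a - 1)) (uIcc 0 1) := by
    refine ContinuousOn.cpow_const (by fun_prop) fun t ht => ?_
    rw [uIcc_of_le zero_le_one] at ht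
    exact_mod_cast ofReal_mem_slitPlane.2 (add_pos_of_pos_of_nonneg one_pos ht.1)
  refine (hsing.mul_continuousOn hcont).congr fun t ht => ?_
  rw [uIoc_of_le zero_le_one] at ht
  exact (one_sub_sq_cpow (Ioc_subset_Icc_self ht) _).symm

lemma hasSum_integral_cosh_mul {f : ℝ → ℂ} (hf : IntervalIntegrable f volume 0 1) (w : ℂ) :
    HasSum (fun n : ℕ => ∫ t in (0 : ℝ)..1, (w * t) ^ (2 * n) / (2 * n).factorial * f t)
      (∫ t in (0 : ℝ)..1, cosh (w * t) * f t) := by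
  have hsummable : Summable fun n : ℕ => ‖w‖ ^ (2 * n) / (2 * n).factorial :=
    (Real.hasSum_cosh ‖w‖).summable
  refine intervalIntegral.hasSum_integral_of_dominated_convergence
    (fun n t => ‖w‖ ^ (2 * n) / (2 * n).factorial * ‖f t‖) (fun n => ?_) (fun n => ?_)
    (.of_forall fun t _ => hsummable.mul_right _) ?_
    (.of_forall fun t _ => (hasSum_cosh (w * t)).mul_right _)
  · rw [uIoc_of_le zero_le_one]
    exact (by fun_prop : Continuous fun t : ℝ => (w * t) ^ (2 * n) / ((2 * n).factorial : ℂ))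
      |>.aestronglyMeasurable.mul hf.1.aestronglyMeasurable
  · refine .of_forall fun t ht => ?_
    rw [uIoc_of_le zero_le_one] at ht
    have hle : ‖w * t‖ ≤ ‖w‖ := by
      rw [norm_mul, norm_real, Real.norm_of_nonneg ht.1.le]
      exact mul_le_of_le_one_right (norm_nonneg w) ht.2
    rw [norm_mul, norm_div, norm_pow, norm_natCast]
    gcongr
  · simp_rw [tsum_mul_right]
    exact hf.norm.const_mul _

/-- Integrate the power series of `cosh` termwise; the moments are Beta integrals. -/
lemma zeroF1reg_eq_integral_cosh {a : ℂ} (ha : 0 < a.re) (w : ℂ) :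
    zeroF1reg (a + 1 / 2) (w ^ 2 / 4) =
      2 / (√π * Gamma a) * ∫ t in (0 : ℝ)..1, cosh (w * t) * (1 - (t : ℂ) ^ 2) ^ (a - 1) := by
  have hGamma : Gamma a ≠ 0 := Gamma_ne_zero_of_re_pos ha
  have hpi : (√π : ℂ) ≠ 0 := ofReal_ne_zero.2 (Real.sqrt_pos.2 Real.pi_pos).ne'
  rw [← (hasSum_integral_cosh_mul (intervalIntegrable_one_sub_sq_cpow ha) w).tsum_eq,
    ← tsum_mul_left, zeroF1reg]
  refine tsum_congr fun n => ?_
  have hmoment : 2 * ∫ t in (0 : ℝ)..1,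
      (w * t) ^ (2 * n) / (2 * n).factorial * (1 - (t : ℂ) ^ 2) ^ (a - 1) =
      w ^ (2 * n) * (betaIntegral (n + 1 / 2) a / (2 * n).factorial) := by
    rw [betaIntegral_eq_two_mul_integral, show 2 * ((n : ℂ) + 1 / 2) - 1 = (2 * n : ℕ) by
      push_cast; ring]
    simp only [cpow_natCast, mul_pow, mul_div_right_comm, mul_assoc,
      intervalIntegral.integral_const_mul]
    ring
  calc (w ^ 2 / 4) ^ n / (n.factorial * Gamma (a + 1 / 2 + n))
      = 1 / (√π * Gamma a) * (w ^ (2 * n) *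
          (√π * Gamma a / (4 ^ n * (n.factorial * Gamma (a + 1 / 2 + n))))) := by
        rw [div_pow, ← pow_mul]
        field_simp
    _ = _ := by
        rw [← betaIntegral_natCast_add_half_div_factorial ha, ← hmoment]
        ring

end Poisson

section BesselAsymptotics

lemma cpow_mul_integral_exp_neg_mul (a : ℂ) (φ : ℝ → ℂ) {r : ℝ} (hr : 0 < r) :
    (r : ℂ) ^ a * ∫ s : ℝ in Ioi 0, exp (-(r * s)) * (s : ℂ) ^ (a - 1) * φ s =
      ∫ x : ℝ in Ioi 0, exp (-x) * (x : ℂ) ^ (a - 1) * φ (x / r) := by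
  have hr0 : (r : ℂ) ≠ 0 := ofReal_ne_zero.2 hr.ne'
  have hscale := integral_comp_mul_left_Ioi'
    (fun x : ℝ => exp (-x) * (x : ℂ) ^ (a - 1) * φ (x / r)) 0 hr
  rw [mul_zero] at hscale
  rw [← hscale, real_smul, ← integral_const_mul, ← integral_const_mul]
  refine setIntegral_congr_fun measurableSet_Ioi fun s hs => ?_
  simp only [ofReal_mul, mul_div_cancel_left₀ _ hr.ne']
  rw [mul_cpow_ofReal_nonneg hr.le (le_of_lt hs), cpow_sub a 1 hr0, cpow_one]
  field_simp

/-- Watson's lemma, to leading order. -/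
lemma tendsto_cpow_mul_integral_exp_neg_mul {a L : ℂ} (ha : 0 < a.re) {φ : ℝ → ℂ} {C : ℝ}
    (hφ : Measurable φ) (hC : ∀ s > 0, ‖φ s‖ ≤ C) (hL : Tendsto φ (𝓝[>] 0) (𝓝 L)) :
    Tendsto (fun r : ℝ => (r : ℂ) ^ a * ∫ s : ℝ in Ioi 0, exp (-(r * s)) * (s : ℂ) ^ (a - 1) * φ s)
      atTop (𝓝 (Gamma a * L)) := by
  have hGamma : ∫ x : ℝ in Ioi 0, exp (-x) * (x : ℂ) ^ (a - 1) * L = Gamma a * L := by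
    rw [Gamma_eq_integral ha, GammaIntegral, integral_mul_const]
    simp only [ofReal_exp, ofReal_neg]
  rw [← hGamma]
  refine Tendsto.congr' (f₁ := fun r : ℝ => ∫ x : ℝ in Ioi 0,
    exp (-x) * (x : ℂ) ^ (a - 1) * φ (x / r)) ?_ ?_
  · filter_upwards [eventually_gt_atTop 0] with r hr
    exact (cpow_mul_integral_exp_neg_mul a φ hr).symm
  refine tendsto_integral_filter_of_dominated_convergence
    (fun x => Real.exp (-x) * x ^ (a.re - 1) * C) (.of_forall fun r => ?_) ?_
    ((Real.GammaIntegral_convergent ha).mul_const C) ?_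
  · exact Measurable.aestronglyMeasurable (by fun_prop)
  · filter_upwards [eventually_gt_atTop 0] with r hr
    refine (ae_restrict_iff' measurableSet_Ioi).2 (.of_forall fun x (hx : 0 < x) => ?_)
    rw [norm_mul, norm_mul, ← ofReal_neg, norm_exp_ofReal,
      norm_cpow_eq_rpow_re_of_pos hx, sub_re, one_re]
    gcongr
    exact hC (x / r) (div_pos hx hr)
  · refine (ae_restrict_iff' measurableSet_Ioi).2 (.of_forall fun x (hx : 0 < x) => ?_)
    have hdiv : Tendsto (fun r : ℝ => x / r) atTop (𝓝[>] 0) := by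
      refine tendsto_nhdsWithin_iff.2 ⟨tendsto_const_nhds.div_atTop tendsto_id, ?_⟩
      filter_upwards [eventually_gt_atTop 0] with r hr using div_pos hx hr
    exact (hL.comp hdiv).const_mul _

lemma tendsto_cpow_mul_intervalIntegral_exp_neg_mul {a : ℂ} (ha : 0 < a.re) {b : ℝ} (hb : 0 < b)
    {g : ℝ → ℂ} (hg : ContinuousOn g (Icc 0 b)) :
    Tendsto (fun r : ℝ => (r : ℂ) ^ a *
        ∫ s in (0 : ℝ)..b, exp (-(r * s)) * (s : ℂ) ^ (a - 1) * g s)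
      atTop (𝓝 (Gamma a * g 0)) := by
  obtain ⟨C, hC⟩ := isCompact_Icc.exists_bound_of_continuousOn hg
  have hC0 : 0 ≤ C := (norm_nonneg _).trans (hC 0 (left_mem_Icc.2 hb.le))
  have hmeas : Measurable ((Ioc 0 b).indicator g) := by
    rw [← piecewise_eq_indicator]
    exact (hg.mono Ioc_subset_Icc_self).measurable_piecewise continuousOn_const measurableSet_Ioc
  have hbound (s : ℝ) (_ : s > 0) : ‖(Ioc 0 b).indicator g s‖ ≤ C := by
    rw [norm_indicator_eq_indicator_norm]
    exact indicator_apply_le' (fun hs => hC s (Ioc_subset_Icc_self hs)) fun _ => hC0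
  have hlim : Tendsto ((Ioc 0 b).indicator g) (𝓝[>] 0) (𝓝 (g 0)) := by
    have h := (hg 0 (left_mem_Icc.2 hb.le)).mono_left (nhdsWithin_mono 0 Ioc_subset_Icc_self)
    rw [nhdsWithin_Ioc_eq_nhdsGT hb] at h
    exact h.congr' (eqOn_indicator.symm.eventuallyEq_of_mem (Ioc_mem_nhdsGT hb))
  refine (tendsto_cpow_mul_integral_exp_neg_mul ha hmeas hbound hlim).congr fun r => ?_
  rw [intervalIntegral.integral_of_le hb.le]
  have hindicator (s : ℝ) : exp (-(r * s)) * (s : ℂ) ^ (a - 1) * (Ioc 0 b).indicator g s =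
      (Ioc 0 b).indicator (fun s : ℝ => exp (-(r * s)) * (s : ℂ) ^ (a - 1) * g s) s :=
    (indicator_mul_right _ (fun s : ℝ => exp (-(r * s)) * (s : ℂ) ^ (a - 1)) g).symm
  simp_rw [hindicator]
  rw [setIntegral_indicator measurableSet_Ioc, inter_eq_right.2 Ioc_subset_Ioi_self]

lemma tendsto_cpow_mul_integral_exp_one_sub {a : ℂ} (ha : 0 < a.re) :
    Tendsto (fun r : ℝ => (r : ℂ) ^ a *
        ∫ t in (0 : ℝ)..1, exp (-(r * (1 - t))) * (1 - (t : ℂ) ^ 2) ^ (a - 1))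
      atTop (𝓝 (Gamma a * 2 ^ (a - 1))) := by
  have hcont : ContinuousOn (fun s : ℝ => (2 - (s : ℂ)) ^ (a - 1)) (Icc 0 1) := by
    refine ContinuousOn.cpow_const (by fun_prop) fun s hs => ?_
    exact_mod_cast ofReal_mem_slitPlane.2 (by linarith [hs.2] : 0 < 2 - s)
  have hwatson := tendsto_cpow_mul_intervalIntegral_exp_neg_mul ha one_pos hcont
  rw [ofReal_zero, sub_zero] at hwatson
  refine hwatson.congr fun r => ?_
  have hreflect := intervalIntegral.integral_comp_sub_left (a := 0) (b := 1)
    (fun t : ℝ => exp (-(r * (1 - t))) * (1 - (t : ℂ) ^ 2) ^ (a - 1)) 1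
  rw [sub_self, sub_zero] at hreflect
  rw [← hreflect]
  congr 1
  refine intervalIntegral.integral_congr_Ioo_of_le zero_le_one fun s hs => ?_
  have hfactor := one_sub_sq_cpow (t := 1 - s) ⟨by linarith [hs.2], by linarith [hs.1]⟩ (a - 1)
  rw [hfactor, ofReal_sub, ofReal_one, sub_sub_cancel, mul_assoc,
    show (1 : ℂ) + (1 - s) = 2 - s by ring]

lemma tendsto_cpow_mul_exp_neg_mul_integral_exp_neg {a : ℂ} (ha : 0 < a.re) :
    Tendsto (fun r : ℝ => (r : ℂ) ^ a * (exp (-r) *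
        ∫ t in (0 : ℝ)..1, exp (-(r * t)) * (1 - (t : ℂ) ^ 2) ^ (a - 1)))
      atTop (𝓝 0) := by
  set C : ℝ := ∫ t in (0 : ℝ)..1, ‖(1 - (t : ℂ) ^ 2) ^ (a - 1)‖
  have hdecay : Tendsto (fun r : ℝ => r ^ a.re * Real.exp (-r) * C) atTop (𝓝 0) := by
    simpa using (tendsto_rpow_mul_exp_neg_mul_atTop_nhds_zero a.re 1 one_pos).mul_const C
  refine squeeze_zero_norm' ?_ hdecay
  filter_upwards [eventually_gt_atTop 0] with r hr
  have hint : ‖∫ t in (0 : ℝ)..1, exp (-(r * t)) * (1 - (t : ℂ) ^ 2) ^ (a - 1)‖ ≤ C := by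
    refine intervalIntegral.norm_integral_le_of_norm_le zero_le_one
      (.of_forall fun t ht => ?_) (intervalIntegrable_one_sub_sq_cpow ha).norm
    rw [norm_mul, norm_exp]
    refine mul_le_of_le_one_left (norm_nonneg _) (Real.exp_le_one_iff.2 ?_)
    simpa using mul_nonneg hr.le ht.1.le
  rw [norm_mul, norm_mul, norm_cpow_eq_rpow_re_of_pos hr, ← ofReal_neg, norm_exp_ofReal,
    ← mul_assoc]
  gcongr

lemma exp_neg_mul_integral_cosh_mul {f : ℝ → ℂ} (hf : IntervalIntegrable f volume 0 1) (z : ℂ) :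
    exp (-z) * ∫ t in (0 : ℝ)..1, cosh (z * t) * f t =
      ((∫ t in (0 : ℝ)..1, exp (-(z * (1 - t))) * f t) +
        exp (-z) * ∫ t in (0 : ℝ)..1, exp (-(z * t)) * f t) / 2 := by
  simp only [← intervalIntegral.integral_const_mul]
  rw [← intervalIntegral.integral_add (hf.continuousOn_mul (by fun_prop))
    ((hf.continuousOn_mul (by fun_prop)).const_mul _), ← intervalIntegral.integral_div]
  refine intervalIntegral.integral_congr fun t _ => ?_
  simp only [cosh, show -(z * (1 - t)) = -z + z * t by ring, exp_add]
  ring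

lemma tendsto_exp_neg_mul_besselI1d_of_neg_half_lt_re {m : ℂ} (hm : -(1 / 2) < m.re) :
    Tendsto (fun r : ℝ => exp (-r) * besselI1d m r) atTop (𝓝 (1 / 2)) := by
  set a : ℂ := m + 1 / 2 with ha_def
  have ha : 0 < a.re := by
    rw [ha_def, add_re, show ((1 : ℂ) / 2).re = 1 / 2 by simp]
    linarith
  have hGamma : Gamma a ≠ 0 := Gamma_ne_zero_of_re_pos ha
  have hpi : (√π : ℂ) ≠ 0 := ofReal_ne_zero.2 (Real.sqrt_pos.2 Real.pi_pos).ne'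
  have hlim := ((tendsto_cpow_mul_integral_exp_one_sub ha).add
    (tendsto_cpow_mul_exp_neg_mul_integral_exp_neg ha)).const_mul ((1 / 2) ^ a / Gamma a)
  have hconst : (1 / 2) ^ a / Gamma a * (Gamma a * 2 ^ (a - 1) + 0) = 1 / 2 := by
    have h2 : (2 : ℂ) ^ a ≠ 0 := by simp [cpow_eq_zero_iff]
    rw [cpow_sub a 1 two_ne_zero, cpow_one, one_div, inv_cpow _ _ (by simp [Real.pi_pos.ne])]
    field_simp
    ring
  rw [hconst] at hlim
  refine hlim.congr' ?_
  filter_upwards [eventually_gt_atTop 0] with r hr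
  have hint := exp_neg_mul_integral_cosh_mul (intervalIntegrable_one_sub_sq_cpow ha) r
  have hpow : ((r : ℂ) / 2) ^ (1 / 2 + m) = (1 / 2) ^ a * (r : ℂ) ^ a := by
    have h := mul_cpow_ofReal_nonneg one_half_pos.le hr.le a
    push_cast at h
    rw [← h, ha_def, add_comm m, one_div_mul_eq_div]
  rw [besselI1d, hpow, show m + 1 = a + 1 / 2 by rw [ha_def]; ring, zeroF1reg_eq_integral_cosh ha]
  field_simp
  linear_combination -2 * (r : ℂ) ^ a * hint

lemma tendsto_exp_neg_mul_besselI1d_of_succ {m : ℂ}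
    (h₁ : Tendsto (fun r : ℝ => exp (-r) * besselI1d (m + 1) r) atTop (𝓝 (1 / 2)))
    (h₂ : Tendsto (fun r : ℝ => exp (-r) * besselI1d (m + 2) r) atTop (𝓝 (1 / 2))) :
    Tendsto (fun r : ℝ => exp (-r) * besselI1d m r) atTop (𝓝 (1 / 2)) := by
  have hcoeff : Tendsto (fun r : ℝ => 2 * (m + 1) / (r : ℂ)) atTop (𝓝 0) := by
    simpa [div_eq_mul_inv] using (tendsto_inv₀_cobounded.comp
      (RCLike.tendsto_ofReal_atTop_cobounded ℂ)).const_mul (2 * (m + 1))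
  have hlim := h₂.add (hcoeff.mul h₁)
  rw [zero_mul, add_zero] at hlim
  refine hlim.congr' ?_
  filter_upwards [eventually_gt_atTop 0] with r hr
  have hrec := besselI1d_sub_one (m + 1) (ofReal_ne_zero.2 hr.ne')
  rw [add_sub_cancel_right, show m + 1 + 1 = m + 2 by ring] at hrec
  rw [hrec]
  ring

lemma tendsto_exp_neg_mul_besselI1d (m : ℂ) :
    Tendsto (fun r : ℝ => exp (-r) * besselI1d m r) atTop (𝓝 (1 / 2)) := by
  obtain ⟨n, hn⟩ := exists_nat_gt (-(1 / 2) - m.re)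
  induction n generalizing m with
  | zero =>
    refine tendsto_exp_neg_mul_besselI1d_of_neg_half_lt_re ?_
    rw [Nat.cast_zero] at hn
    linarith
  | succ n ih =>
    rw [Nat.cast_succ] at hn
    refine tendsto_exp_neg_mul_besselI1d_of_succ (ih _ ?_) (ih _ ?_)
    · rw [add_re, one_re]
      linarith
    · rw [add_re, re_ofNat]
      linarith

end BesselAsymptotics

section LHopital

variable {E : Type*} [NormedAddCommGroup E] [NormedSpace ℝ E]

lemma norm_le_of_norm_deriv_le_neg_deriv {f f' : ℝ → E} {φ φ' : ℝ → ℝ} {a : ℝ}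
    (hf : ∀ x ≥ a, HasDerivAt f (f' x) x) (hφ : ∀ x ≥ a, HasDerivAt φ (φ' x) x)
    (hle : ∀ x ≥ a, ‖f' x‖ ≤ -φ' x) (hf0 : Tendsto f atTop (𝓝 0)) (hφ0 : Tendsto φ atTop (𝓝 0)) :
    ‖f a‖ ≤ φ a := by
  have hincrement (y : ℝ) (hy : a ≤ y) : ‖f y - f a‖ ≤ φ a - φ y :=
    image_norm_le_of_norm_deriv_right_le_deriv_boundary' (f := fun x => f x - f a)
      (B := fun x => φ a - φ x)
      (fun x hx => ((hf x hx.1).sub_const _).continuousAt.continuousWithinAt)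
      (fun x hx => ((hf x hx.1).sub_const _).hasDerivWithinAt) (by simp)
      (fun x hx => ((hφ x hx.1).const_sub _).continuousAt.continuousWithinAt)
      (fun x hx => ((hφ x hx.1).const_sub _).hasDerivWithinAt)
      (fun x hx => hle x hx.1) (right_mem_Icc.2 hy)
  simpa using le_of_tendsto_of_tendsto (hf0.sub_const (f a)).norm (hφ0.const_sub (φ a))
    ((eventually_ge_atTop a).mono hincrement)

/-- L'Hôpital's rule for vector-valued functions. -/
lemma isLittleO_of_isLittleO_deriv {f f' : ℝ → E} {φ φ' : ℝ → ℝ}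
    (hf : ∀ᶠ x in atTop, HasDerivAt f (f' x) x) (hφ : ∀ᶠ x in atTop, HasDerivAt φ (φ' x) x)
    (hφ' : ∀ᶠ x in atTop, φ' x ≤ 0) (hf0 : Tendsto f atTop (𝓝 0)) (hφ0 : Tendsto φ atTop (𝓝 0))
    (h : f' =o[atTop] φ') : f =o[atTop] φ := by
  refine IsLittleO.of_bound fun ε hε => ?_
  obtain ⟨A, hA⟩ := eventually_atTop.1 (hf.and (hφ.and (hφ'.and (h.bound hε))))
  filter_upwards [eventually_ge_atTop A] with a ha
  have hle (x : ℝ) (hx : x ≥ a) : ‖f' x‖ ≤ -(ε * φ' x) := by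
    obtain ⟨-, -, hneg, hbound⟩ := hA x (ha.trans hx)
    rwa [Real.norm_of_nonpos hneg, mul_neg] at hbound
  calc ‖f a‖ ≤ ε * φ a :=
        norm_le_of_norm_deriv_le_neg_deriv (fun x hx => (hA x (ha.trans hx)).1)
          (fun x hx => (hA x (ha.trans hx)).2.1.const_mul ε) hle hf0
          (by simpa using hφ0.const_mul ε)
    _ ≤ ε * ‖φ a‖ := by gcongr; exact Real.le_norm_self _

lemma isLittleO_exp_neg_iff {l : Filter ℝ} {u : ℝ → E} {c : ℝ} :
    (u =o[l] fun x => Real.exp (-(c * x))) ↔ Tendsto (fun x => Real.exp (c * x) • u x) l (𝓝 0) := by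
  rw [← isLittleO_one_iff ℝ]
  constructor
  · intro h
    simpa [← Real.exp_add] using (isBigO_refl (fun x => Real.exp (c * x)) l).smul_isLittleO h
  · intro h
    simpa [smul_smul, ← Real.exp_add] using
      (isBigO_refl (fun x => Real.exp (-(c * x))) l).smul_isLittleO h

lemma tendsto_exp_smul_of_tendsto_exp_smul_deriv {g g' : ℝ → E} {c : ℝ} (hc : 0 < c) {L : E}
    (hg : ∀ᶠ x in atTop, HasDerivAt g (g' x) x) (hg0 : Tendsto g atTop (𝓝 0))
    (hL : Tendsto (fun x => Real.exp (c * x) • g' x) atTop (𝓝 L)) :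
    Tendsto (fun x => Real.exp (c * x) • g x) atTop (𝓝 (-c⁻¹ • L)) := by
  have hexp (x : ℝ) : HasDerivAt (fun x => Real.exp (-(c * x))) (-c * Real.exp (-(c * x))) x := by
    simpa [mul_comm] using ((hasDerivAt_id x).const_mul c).neg.exp
  have hexp0 : Tendsto (fun x : ℝ => Real.exp (-(c * x))) atTop (𝓝 0) :=
    Real.tendsto_exp_neg_atTop_nhds_zero.comp (tendsto_id.const_mul_atTop hc)
  have hderiv : (fun x => g' x + (-c * Real.exp (-(c * x))) • c⁻¹ • L) =o[atTop]
      fun x => -c * Real.exp (-(c * x)) := by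
    refine (isLittleO_const_mul_right_iff (neg_ne_zero.2 hc.ne')).2 (isLittleO_exp_neg_iff.2 ?_)
    refine (tendsto_sub_nhds_zero_iff.2 hL).congr fun x => ?_
    have hcancel : Real.exp (c * x) * (-c * Real.exp (-(c * x))) * c⁻¹ = -1 := by
      rw [Real.exp_neg]
      field_simp
    rw [smul_add, smul_smul, smul_smul, hcancel, neg_one_smul, sub_eq_add_neg]
  have hremainder := isLittleO_exp_neg_iff.1 <| isLittleO_of_isLittleO_deriv
    (f := fun x => g x + Real.exp (-(c * x)) • c⁻¹ • L)
    (hg.mono fun x hx => hx.add ((hexp x).smul_const (c⁻¹ • L))) (.of_forall hexp)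
    (.of_forall fun x => mul_nonpos_of_nonpos_of_nonneg (neg_nonpos.2 hc.le) (Real.exp_nonneg _))
    (by simpa using hg0.add (hexp0.smul_const (c⁻¹ • L))) hexp0 hderiv
  refine tendsto_sub_nhds_zero_iff.1 (hremainder.congr fun x => ?_)
  rw [smul_add, smul_smul, ← Real.exp_add, add_neg_cancel, Real.exp_zero, one_smul, neg_smul,
    sub_neg_eq_add]

end LHopital

lemma eventually_besselI1d_ne_zero (m : ℂ) : ∀ᶠ r : ℝ in atTop, besselI1d m r ≠ 0 :=
  ((tendsto_exp_neg_mul_besselI1d m).eventually_ne (by norm_num)).mono fun _ =>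
    right_ne_zero_of_mul

lemma tendsto_macdonaldK1d_div_besselI1d (m : ℂ) :
    Tendsto (fun r : ℝ => macdonaldK1d m r / besselI1d m r) atTop (𝓝 0) := by
  have hquot := (tendsto_exp_neg_mul_besselI1d (-m)).div (tendsto_exp_neg_mul_besselI1d m)
    (by norm_num)
  have hlim := (hquot.sub_const 1).div_const (sin (π * m))
  rw [div_self (by norm_num), sub_self, zero_div] at hlim
  refine hlim.congr' ?_
  filter_upwards [eventually_besselI1d_ne_zero m] with r hr
  rw [Pi.div_apply, mul_div_mul_left _ _ (exp_ne_zero _), macdonaldK1d]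
  field_simp

lemma ofReal_exp_two_mul (r : ℝ) : (Real.exp (2 * r) : ℂ) = exp r ^ 2 := by
  rw [← exp_nat_mul]
  push_cast
  rfl

lemma tendsto_exp_two_mul_smul_macdonaldK1d_div_besselI1d {m : ℂ} (hm : sin (π * m) ≠ 0) :
    Tendsto (fun r : ℝ => Real.exp (2 * r) • (macdonaldK1d m r / besselI1d m r)) atTop (𝓝 2) := by
  have hderiv : ∀ᶠ r : ℝ in atTop, HasDerivAt (fun r : ℝ => macdonaldK1d m r / besselI1d m r)
      (-1 / besselI1d m r ^ 2) r := by
    filter_upwards [eventually_gt_atTop 0, eventually_besselI1d_ne_zero m] with r hr hI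
    exact (hasDerivAt_macdonaldK1d_div_besselI1d hm (ofReal_mem_slitPlane.2 hr) hI).comp_ofReal
  have hscaled : Tendsto (fun r : ℝ => Real.exp (2 * r) • (-1 / besselI1d m r ^ 2)) atTop
      (𝓝 (-((1 / 2) ^ 2)⁻¹)) := by
    refine ((((tendsto_exp_neg_mul_besselI1d m).pow 2).inv₀ (by norm_num)).neg).congr fun r => ?_
    rw [real_smul, ofReal_exp_two_mul, mul_pow, exp_neg, mul_inv, inv_pow, inv_inv]
    ring
  have hlim := tendsto_exp_smul_of_tendsto_exp_smul_deriv two_pos hderiv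
    (tendsto_macdonaldK1d_div_besselI1d m) hscaled
  rwa [show -(2 : ℝ)⁻¹ • -((1 / 2 : ℂ) ^ 2)⁻¹ = 2 by rw [real_smul]; push_cast; norm_num] at hlim

/-- for `m ∈ ℂ ∖ ℤ`, `e^r 𝓚_m(r) → 1` as `r → ∞` along the positive real
axis. -/
theorem macdonaldK1d_asymptotics (m : ℂ) (hm : ∀ n : ℤ, m ≠ (n : ℂ)) :
    Tendsto (fun r : ℝ => Complex.exp r * macdonaldK1d m r) atTop (nhds 1) := by
  have hsin : sin (π * m) ≠ 0 := by
    rw [Ne, sin_eq_zero_iff]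
    rintro ⟨k, hk⟩
    exact hm k (mul_left_cancel₀ (ofReal_ne_zero.2 Real.pi_ne_zero) (hk.trans (mul_comm _ _)))
  have hlim := (tendsto_exp_two_mul_smul_macdonaldK1d_div_besselI1d hsin).mul
    (tendsto_exp_neg_mul_besselI1d m)
  rw [mul_one_div_cancel two_ne_zero] at hlim
  refine hlim.congr' ?_
  filter_upwards [eventually_besselI1d_ne_zero m] with r hI
  rw [real_smul, ofReal_exp_two_mul, exp_neg]
  have := exp_ne_zero (r : ℂ)
  field_simp
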